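/- Let ∇⁰, ∇¹ be ℝ-linear connections of L on E with h-adjoint connections ∇⁰ʰ, ∇¹ʰ. Then for every p ≥ 1: cs_p(∇⁰ʰ, ∇¹ʰ) = (−1)^p · cs_p(∇⁰, ∇¹). -/

import Mathlib

open Module

/-- The trace over `C` of an `ℝ`-linear endomorphism of `E` whose underlying
function happens to be `C`-linear (and `0` otherwise). -/
noncomputable def trR (C : Type*) {E : Type*} [CommRing C] [AddCommGroup E]
    [Module ℝ E] [Module C E] (e : E →ₗ[ℝ] E) : C :=
  letI := Classical.propDecidable
  if h : ∃ g : E →ₗ[C] E, ⇑g = ⇑e then LinearMap.trace C E h.choose else 0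

/-- An ℝ-linear connection of the Lie algebra `L` (with anchor `ρ`) on the `C`-module `E`. -/
def IsConn {L C E : Type*} [LieRing L] [LieAlgebra ℝ L] [CommRing C] [Algebra ℝ C]
    [AddCommGroup E] [Module ℝ E] [Module C E]
    (ρ : L →ₗ[ℝ] Derivation ℝ C C) (D : L →ₗ[ℝ] Module.End ℝ E) : Prop :=
  ∀ (a : L) (f : C) (e : E), D a (f • e) = f • D a e + ρ a f • e

/-- The curvature of an ℝ-linear map `D : L →ₗ[ℝ] End ℝ E`. -/
def curv {L E : Type*} [LieRing L] [LieAlgebra ℝ L] [AddCommGroup E] [Module ℝ E]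
    (D : L →ₗ[ℝ] Module.End ℝ E) (a b : L) : Module.End ℝ E :=
  D a * D b - D b * D a - D ⁅a, b⁆

/-- The curvature as an `End ℝ E`-valued 2-form. -/
def curv2 {L E : Type*} [LieRing L] [LieAlgebra ℝ L] [AddCommGroup E] [Module ℝ E]
    (D : L →ₗ[ℝ] Module.End ℝ E) : (Fin 2 → L) → Module.End ℝ E :=
  fun a => curv D (a 0) (a 1)

/-- The Chevalley–Eilenberg style differential of a `V`-valued `n`-form on `L`,
with respect to an action `act` of `L` on `V`:
`(dω)(a₁,…,a_{n+1}) = Σᵢ (−1)^{i+1} act(aᵢ)(ω(a₁,…,âᵢ,…)) +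
  Σ_{i<j} (−1)^{i+j} ω(⁅aᵢ,aⱼ⁆, a₁,…,âᵢ,…,âⱼ,…)`. -/
def dGen {L V : Type*} [LieRing L] [AddCommGroup V] (act : L → V → V) :
    {n : ℕ} → ((Fin n → L) → V) → ((Fin (n + 1) → L) → V)
  | 0, ω, a => act (a 0) (ω Fin.elim0)
  | (m + 1), ω, a =>
      (∑ i : Fin (m + 2), (-1 : ℤ) ^ (i : ℕ) • act (a i) (ω (fun k => a (i.succAbove k)))) +
      ∑ i : Fin (m + 2), ∑ j : Fin (m + 2),
        if h : (i : ℕ) < (j : ℕ) then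
          (-1 : ℤ) ^ ((i : ℕ) + (j : ℕ)) • ω (Fin.cons ⁅a i, a j⁆
            (fun k : Fin m => a (j.succAbove
              ((⟨(i : ℕ), by have := j.isLt; omega⟩ : Fin (m + 1)).succAbove k))))
        else 0

/-- The differential `d_ρ` on `C`-valued ℝ-linear forms on `L`. -/
def dRho {L C : Type*} [LieRing L] [LieAlgebra ℝ L] [CommRing C] [Algebra ℝ C]
    (ρ : L →ₗ[ℝ] Derivation ℝ C C) {n : ℕ} (ω : (Fin n → L) → C) :
    (Fin (n + 1) → L) → C :=
  dGen (fun a c => ρ a c) ω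

/-- The differential `d^{∇̄}` on `End ℝ E`-valued ℝ-linear forms on `L`,
where `∇̄_a = [∇_a, ·]`. -/
def dEnd {L E : Type*} [LieRing L] [LieAlgebra ℝ L] [AddCommGroup E] [Module ℝ E]
    (D : L →ₗ[ℝ] Module.End ℝ E) {n : ℕ} (ω : (Fin n → L) → Module.End ℝ E) :
    (Fin (n + 1) → L) → Module.End ℝ E :=
  dGen (fun a φ => D a * φ - φ * D a) ω

/-- The wedge product (with composition as multiplication of values) of
`End ℝ E`-valued forms:
`(ω∧η)(a₁,…,a_{m+n}) = (1/(m!·n!)) Σ_{τ} sgn τ · ω(a_{τ(1)},…) ∘ η(a_{τ(m+1)},…)`. -/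
noncomputable def wedge {L E : Type*} [AddCommGroup E] [Module ℝ E] {m n : ℕ}
    (ω : (Fin m → L) → Module.End ℝ E) (η : (Fin n → L) → Module.End ℝ E) :
    (Fin (m + n) → L) → Module.End ℝ E :=
  fun a => ((m.factorial * n.factorial : ℝ))⁻¹ •
    ∑ τ : Equiv.Perm (Fin (m + n)), ((Equiv.Perm.sign τ : ℤ) •
      (ω (fun i => a (τ (Fin.castAdd n i))) * η (fun j => a (τ (Fin.natAdd m j)))))

/-- The `p`-th wedge power of an `End ℝ E`-valued 2-form. -/
noncomputable def wpow {L E : Type*} [AddCommGroup E] [Module ℝ E]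
    (R : (Fin 2 → L) → Module.End ℝ E) :
    (p : ℕ) → (Fin (2 * p) → L) → Module.End ℝ E
  | 0 => fun _ => 1
  | (p + 1) => fun a => wedge R (wpow R p) (fun i => a (Fin.cast (by omega) i))

/-- The `k`-th wedge power of an `End ℝ E`-valued 1-form. -/
noncomputable def wpow1 {L E : Type*} [AddCommGroup E] [Module ℝ E]
    (θ : (Fin 1 → L) → Module.End ℝ E) :
    (k : ℕ) → (Fin k → L) → Module.End ℝ E
  | 0 => fun _ => 1
  | (k + 1) => fun a => wedge θ (wpow1 θ k) (fun i => a (Fin.cast (by omega) i))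

/-- The Chern character form `ch_p(∇) = Tr_*((R^∇)^{∧p})`. -/
noncomputable def chp {L E : Type*} (C : Type*) [LieRing L] [LieAlgebra ℝ L]
    [CommRing C] [AddCommGroup E] [Module ℝ E] [Module C E]
    (D : L →ₗ[ℝ] Module.End ℝ E) (p : ℕ) : (Fin (2 * p) → L) → C :=
  fun a => trR C (wpow (curv2 D) p a)

/-- `∫₀ˢ f(t) dt` for a function `f : ℝ → C` given by a polynomial with
coefficients in the ℝ-algebra `C` (and `0` if `f` is not polynomial). -/
noncomputable def intPolyTo {C : Type*} [CommRing C] [Algebra ℝ C] (s : ℝ) (f : ℝ → C) : C :=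
  letI := Classical.propDecidable
  if h : ∃ P : Polynomial C, ∀ t : ℝ, f t = Polynomial.eval (algebraMap ℝ C t) P then
    ∑ k ∈ Finset.range (h.choose.natDegree + 1),
      (s ^ (k + 1) / ((k : ℝ) + 1)) • h.choose.coeff k
  else 0

/-- The valuewise integral over the standard 2-simplex
`Δ² = {(t₁,t₂) : t₁ ≥ 0, t₂ ≥ 0, t₁ + t₂ ≤ 1}` of a `C`-valued polynomial function. -/
noncomputable def intSimplex2 {C : Type*} [CommRing C] [Algebra ℝ C] (f : ℝ → ℝ → C) : C :=
  intPolyTo 1 (fun t1 => intPolyTo (1 - t1) (fun t2 => f t1 t2))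

/-- The Chern–Simons transgression form for a pair of ℝ-linear connections:
`cs_p(∇⁰,∇¹) = p·∫₀¹ Tr_*(λ ∧ (R_t)^{∧(p−1)}) dt` where `λ = ∇¹ − ∇⁰` and
`R_t` is the curvature of `∇⁰ + t•λ`. -/
noncomputable def csPair {L E : Type*} (C : Type*) [LieRing L] [LieAlgebra ℝ L]
    [CommRing C] [Algebra ℝ C] [AddCommGroup E] [Module ℝ E] [Module C E]
    (D0 D1 : L →ₗ[ℝ] Module.End ℝ E) (p : ℕ) : (Fin (2 * (p - 1) + 1) → L) → C :=
  fun a => (p : ℝ) • intPolyTo 1 (fun t =>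
    trR C (wedge (fun v : Fin 1 → L => (D1 - D0) (v 0))
      (wpow (curv2 (D0 + t • (D1 - D0))) (p - 1))
      (fun i => a (Fin.cast (by omega) i))))

/-- The Chern–Simons transgression form for a triple of ℝ-linear connections:
`cs_p(∇⁰,∇¹,∇²) = −p(p−1)·∫_{Δ²} Tr_*(λ₁ ∧ λ₂ ∧ (R_{(t₁,t₂)})^{∧(p−2)}) dt₁dt₂`
where `λᵢ = ∇ⁱ − ∇⁰` and `R_{(t₁,t₂)}` is the curvature of `∇⁰ + t₁•λ₁ + t₂•λ₂`. -/
noncomputable def csTriple {L E : Type*} (C : Type*) [LieRing L] [LieAlgebra ℝ L]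
    [CommRing C] [Algebra ℝ C] [AddCommGroup E] [Module ℝ E] [Module C E]
    (D0 D1 D2 : L →ₗ[ℝ] Module.End ℝ E) (p : ℕ) : (Fin (2 * (p - 2) + 2) → L) → C :=
  fun a => (-((p : ℝ) * ((p : ℝ) - 1))) • intSimplex2 (fun t1 t2 =>
    trR C (wedge (fun v : Fin 1 → L => (D1 - D0) (v 0))
      (wedge (fun v : Fin 1 → L => (D2 - D0) (v 0))
        (wpow (curv2 (D0 + t1 • (D1 - D0) + t2 • (D2 - D0))) (p - 2)))
      (fun i => a (Fin.cast (by omega) i))))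

/-! Write `f*` for the adjoint of `f` along the pairing `h`; passing to adjoints reverses products
and preserves traces. Subtracting the duality relations of two connections gives `λ' = -λ*`, and
commuting two covariant derivatives gives the same relation `R' = -R*` for the curvatures of dual
connections. Up to a scalar that depends only on the degree, `λ ∧ R ∧ ⋯ ∧ R` is the
antisymmetrization of `λ(a₀) R(a₁, a₂) ⋯ R(a₂ₙ₋₁, a₂ₙ)`. Taking adjoints therefore produces the
factor `(-1)ⁿ⁺¹` and reverses the word. Cyclicity of the trace moves `λ` back to the front, and
reversing the order of the `n` blocks of length two is an even permutation. -/

section Antisymmetrization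

variable {L ι κ A B : Type*} [Fintype ι] [DecidableEq ι] [Fintype κ] [DecidableEq κ]

/-- The antisymmetrization `a ↦ ∑_σ sgn(σ) G(a ∘ σ)` of a function `G` of a family of vectors
indexed by `ι`, without the factor `1 / |ι|!`. The index type is arbitrary so that the
arguments can be grouped into blocks. -/
def antisymmetrize [AddCommGroup A] (G : (ι → L) → A) (a : ι → L) : A :=
  ∑ σ : Equiv.Perm ι, (Equiv.Perm.sign σ : ℤ) • G (a ∘ σ)

lemma map_antisymmetrize {Φ : Type*} [AddCommGroup A] [AddCommGroup B] [FunLike Φ A B]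
    [AddMonoidHomClass Φ A B] (φ : Φ) (G : (ι → L) → A) (a : ι → L) :
    φ (antisymmetrize G a) = antisymmetrize (φ ∘ G) a := by
  simp only [antisymmetrize, map_sum, map_zsmul, Function.comp_apply]

lemma antisymmetrize_smul {M : Type*} [AddCommGroup A] [DistribSMul M A] (c : M)
    (G : (ι → L) → A) (a : ι → L) :
    antisymmetrize (fun b => c • G b) a = c • antisymmetrize G a :=
  (map_antisymmetrize (DistribSMul.toAddMonoidHom A c) G a).symm

lemma antisymmetrize_comp_perm [AddCommGroup A] (π : Equiv.Perm ι) (G : (ι → L) → A) (a : ι → L) :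
    antisymmetrize (fun b => G (b ∘ π)) a = (Equiv.Perm.sign π : ℤ) • antisymmetrize G a := by
  rw [antisymmetrize, antisymmetrize, Finset.smul_sum]
  refine Fintype.sum_equiv (Equiv.mulRight π) _ _ fun σ => ?_
  rw [Equiv.coe_mulRight, smul_smul, Equiv.Perm.sign_mul, Units.val_mul, mul_left_comm,
    Int.units_coe_mul_self, mul_one]
  rfl

lemma antisymmetrize_comp_equiv [AddCommGroup A] (e : ι ≃ κ) (G : (ι → L) → A) (a : κ → L) :
    antisymmetrize (fun b => G (b ∘ e)) a = antisymmetrize G (a ∘ e) := by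
  refine (Fintype.sum_equiv e.permCongr _ _ fun σ => ?_).symm
  rw [Equiv.Perm.sign_permCongr]
  congr 2
  funext i
  simp [Equiv.permCongr_apply]

lemma antisymmetrize_mul_antisymmetrize [Ring A] (F : (ι → L) → A) (G : (κ → L) → A)
    (a : ι ⊕ κ → L) :
    antisymmetrize (fun b => F (b ∘ Sum.inl) * antisymmetrize G (b ∘ Sum.inr)) a =
      (Fintype.card κ).factorial •
        antisymmetrize (fun b => F (b ∘ Sum.inl) * G (b ∘ Sum.inr)) a := by
  let H (b : ι ⊕ κ → L) : A := F (b ∘ Sum.inl) * G (b ∘ Sum.inr)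
  have expand (b : ι ⊕ κ → L) : F (b ∘ Sum.inl) * antisymmetrize G (b ∘ Sum.inr) =
      ∑ σ : Equiv.Perm κ, (Equiv.Perm.sign σ : ℤ) • H (b ∘ Equiv.sumCongr 1 σ) := by
    rw [antisymmetrize, Finset.mul_sum]
    exact Finset.sum_congr rfl fun σ _ => mul_smul_comm _ _ _
  have absorb (σ : Equiv.Perm κ) :
      antisymmetrize (fun b => (Equiv.Perm.sign σ : ℤ) • H (b ∘ Equiv.sumCongr 1 σ)) a =
        antisymmetrize H a := by
    rw [antisymmetrize_smul, antisymmetrize_comp_perm, Equiv.Perm.sign_sumCongr,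
      Equiv.Perm.sign_one, one_mul, smul_smul, Int.units_coe_mul_self, one_smul]
  simp only [expand]
  calc antisymmetrize
        (fun b => ∑ σ : Equiv.Perm κ, (Equiv.Perm.sign σ : ℤ) • H (b ∘ Equiv.sumCongr 1 σ)) a
      = ∑ σ : Equiv.Perm κ,
          antisymmetrize (fun b => (Equiv.Perm.sign σ : ℤ) • H (b ∘ Equiv.sumCongr 1 σ)) a := by
        simp only [antisymmetrize, Finset.smul_sum]
        exact Finset.sum_comm
    _ = (Fintype.card κ).factorial • antisymmetrize H a := by
        rw [Finset.sum_congr rfl fun σ _ => absorb σ, Finset.sum_const, Finset.card_univ,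
          Fintype.card_perm]

end Antisymmetrization

section Words

variable {L A B κ : Type*}

/-- The product `R(b₁) ⋯ R(bₙ)`, where `bᵢ` is the `i`-th block of the family `b`: the function
whose antisymmetrization is a multiple of the `n`-th wedge power of `R`. -/
def blockProd [Monoid A] (R : (κ → L) → A) (n : ℕ) (b : Fin n × κ → L) : A :=
  (List.ofFn fun i => R fun j => b (i, j)).prod

lemma map_blockProd {Φ : Type*} [Monoid A] [Monoid B] [FunLike Φ A B] [MonoidHomClass Φ A B]
    (φ : Φ) (R : (κ → L) → A) (n : ℕ) (b : Fin n × κ → L) :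
    φ (blockProd R n b) = blockProd (φ ∘ R) n b := by
  rw [blockProd, map_list_prod, List.map_ofFn]
  rfl

lemma blockProd_succ [Monoid A] (R : (κ → L) → A) (n : ℕ) (b : Fin (n + 1) × κ → L) :
    blockProd R (n + 1) b =
      R (fun j => b (0, j)) * blockProd R n (fun x => b (x.1.succ, x.2)) := by
  rw [blockProd, List.ofFn_succ, List.prod_cons]
  rfl

lemma blockProd_succ_last [Monoid A] (R : (κ → L) → A) (n : ℕ) (b : Fin (n + 1) × κ → L) :
    blockProd R (n + 1) b =
      blockProd R n (fun x => b (x.1.castSucc, x.2)) * R (fun j => b (Fin.last n, j)) := by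
  rw [blockProd, List.ofFn_succ', List.prod_concat]
  rfl

/-- The word `λ(b₀) R(b₁) ⋯ R(bₙ)` underlying `λ ∧ R ∧ ⋯ ∧ R`, for a 1-form `l` (the paper's `λ`)
and a 2-form `R`. -/
def chernSimonsWord [Monoid A] (l : L → A) (R : (Fin 2 → L) → A) (n : ℕ)
    (b : Fin 1 ⊕ Fin n × Fin 2 → L) : A :=
  l (b (Sum.inl 0)) * blockProd R n (b ∘ Sum.inr)

lemma map_chernSimonsWord {Φ : Type*} [Monoid A] [Monoid B] [FunLike Φ A B]
    [MonoidHomClass Φ A B] (φ : Φ) (l : L → A) (R : (Fin 2 → L) → A) (n : ℕ)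
    (b : Fin 1 ⊕ Fin n × Fin 2 → L) :
    φ (chernSimonsWord l R n b) = chernSimonsWord (φ ∘ l) (φ ∘ R) n b := by
  rw [chernSimonsWord, map_mul, map_blockProd]
  rfl

end Words

section Wedge

variable {L E : Type*} [AddCommGroup E] [Module ℝ E]

lemma wedge_eq_antisymmetrize {m n : ℕ} (ω : (Fin m → L) → Module.End ℝ E)
    (η : (Fin n → L) → Module.End ℝ E) (a : Fin (m + n) → L) :
    wedge ω η a = ((m.factorial * n.factorial : ℝ))⁻¹ •
      antisymmetrize (fun b : Fin m ⊕ Fin n → L => ω (b ∘ Sum.inl) * η (b ∘ Sum.inr))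
        (a ∘ finSumFinEquiv) := by
  rw [← antisymmetrize_comp_equiv]
  rfl

lemma wedge_antisymmetrize {ι : Type*} [Fintype ι] [DecidableEq ι] {m n : ℕ} (e : ι ≃ Fin n)
    (ω : (Fin m → L) → Module.End ℝ E) {η : (Fin n → L) → Module.End ℝ E}
    {c : ℝ} {G : (ι → L) → Module.End ℝ E} (hη : ∀ b, η b = c • antisymmetrize G (b ∘ e))
    (a : Fin (m + n) → L) :
    wedge ω η a = ((m.factorial : ℝ)⁻¹ * c) •
      antisymmetrize (fun b : Fin m ⊕ ι → L => ω (b ∘ Sum.inl) * G (b ∘ Sum.inr))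
        (a ∘ (Equiv.sumCongr (Equiv.refl _) e).trans finSumFinEquiv) := by
  let A (b : Fin m ⊕ ι → L) := ω (b ∘ Sum.inl) * antisymmetrize G (b ∘ Sum.inr)
  let f : Fin m ⊕ ι ≃ Fin m ⊕ Fin n := Equiv.sumCongr (Equiv.refl _) e
  have factor (b : Fin m ⊕ Fin n → L) :
      ω (b ∘ Sum.inl) * η (b ∘ Sum.inr) = c • A (b ∘ f) := by
    rw [hη, mul_smul_comm]
    rfl
  have hcard : Fintype.card ι = n := by rw [Fintype.card_congr e, Fintype.card_fin]
  have hn : (n.factorial : ℝ) ≠ 0 := Nat.cast_ne_zero.2 n.factorial_ne_zero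
  rw [wedge_eq_antisymmetrize]
  simp only [factor]
  rw [antisymmetrize_smul, antisymmetrize_comp_equiv, antisymmetrize_mul_antisymmetrize, hcard,
    ← Nat.cast_smul_eq_nsmul ℝ, smul_smul, smul_smul]
  congr 1
  field_simp

/-- The numbering of `n` consecutive blocks of length two, sending `(i, j)` to `2 * i + j`. -/
def pairBlockEquiv (n : ℕ) : Fin n × Fin 2 ≃ Fin (2 * n) :=
  finProdFinEquiv.trans (finCongr (Nat.mul_comm n 2))

/-- The reindexing that splits off the first of `n + 1` blocks of length two. -/
def consPairBlockEquiv (n : ℕ) : Fin 2 ⊕ Fin n × Fin 2 ≃ Fin (n + 1) × Fin 2 where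
  toFun := Sum.elim (fun j => (0, j)) (fun x => (x.1.succ, x.2))
  invFun x := Fin.cases (Sum.inl x.2) (fun i => Sum.inr (i, x.2)) x.1
  left_inv x := by rcases x with j | x <;> rfl
  right_inv := by
    rintro ⟨i, j⟩
    cases i using Fin.cases <;> rfl

lemma pairBlockEquiv_consPairBlockEquiv (n : ℕ) (x : Fin 2 ⊕ Fin n × Fin 2) :
    pairBlockEquiv (n + 1) (consPairBlockEquiv n x) =
      Fin.cast (by lia)
        ((Equiv.sumCongr (Equiv.refl _) (pairBlockEquiv n)).trans finSumFinEquiv x) := by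
  ext
  rcases x with j | ⟨i, j⟩ <;>
    simp [pairBlockEquiv, consPairBlockEquiv, finProdFinEquiv, Nat.mul_add, Nat.add_comm,
      Nat.add_left_comm]

lemma wpow_eq_antisymmetrize (R : (Fin 2 → L) → Module.End ℝ E) (n : ℕ) (a : Fin (2 * n) → L) :
    wpow R n a = ((2 : ℝ) ^ n)⁻¹ • antisymmetrize (blockProd R n) (a ∘ pairBlockEquiv n) := by
  induction n with
  | zero => simp [wpow, antisymmetrize, blockProd]
  | succ n ih =>
    have split := antisymmetrize_comp_equiv (consPairBlockEquiv n)
      (fun c => R (c ∘ Sum.inl) * blockProd R n (c ∘ Sum.inr)) (a ∘ pairBlockEquiv (n + 1))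
    rw [funext (blockProd_succ R n)]
    refine Eq.trans ?_ (congrArg _ split.symm)
    simp only [wpow]
    rw [wedge_antisymmetrize (pairBlockEquiv n) R ih, Nat.factorial_two, Nat.cast_ofNat,
      ← mul_inv, ← pow_succ']
    congr 2
    exact funext fun x => congrArg a (pairBlockEquiv_consPairBlockEquiv n x).symm

lemma wedge_wpow_eq_antisymmetrize (l : L → Module.End ℝ E) (R : (Fin 2 → L) → Module.End ℝ E)
    (n : ℕ) (a : Fin (1 + 2 * n) → L) :
    wedge (fun v : Fin 1 → L => l (v 0)) (wpow R n) a =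
      ((2 : ℝ) ^ n)⁻¹ • antisymmetrize (chernSimonsWord l R n)
        (a ∘ (Equiv.sumCongr (Equiv.refl _) (pairBlockEquiv n)).trans finSumFinEquiv) := by
  rw [wedge_antisymmetrize (pairBlockEquiv n) _ (wpow_eq_antisymmetrize R n), Nat.factorial_one,
    Nat.cast_one, inv_one, one_mul]
  rfl

end Wedge

section RestrictScalars

variable {L C E : Type*} [CommRing C] [Algebra ℝ C] [AddCommGroup E] [Module ℝ E] [Module C E]
  [IsScalarTower ℝ C E]

variable (C E) in
/-- The inclusion of the `C`-linear endomorphisms of `E` into the `ℝ`-linear ones. -/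
def restrictScalarsEnd : Module.End C E →ₐ[ℝ] Module.End ℝ E :=
  AlgHom.ofLinearMap (LinearMap.restrictScalarsₗ ℝ C E E ℝ) rfl fun _ _ => rfl

lemma trR_restrictScalarsEnd (f : Module.End C E) :
    trR C (restrictScalarsEnd C E f) = LinearMap.trace C E f := by
  have lift : ∃ g : E →ₗ[C] E, ⇑g = ⇑(restrictScalarsEnd C E f) := ⟨f, rfl⟩
  rw [trR, dif_pos lift, DFunLike.coe_injective lift.choose_spec]

lemma trR_wedge_wpow (l : L → Module.End C E) (R : (Fin 2 → L) → Module.End C E) (n : ℕ)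
    (a : Fin (1 + 2 * n) → L) :
    trR C (wedge (fun v : Fin 1 → L => restrictScalarsEnd C E (l (v 0)))
        (wpow (fun v => restrictScalarsEnd C E (R v)) n) a) =
      ((2 : ℝ) ^ n)⁻¹ • antisymmetrize (fun b => LinearMap.trace C E (chernSimonsWord l R n b))
        (a ∘ (Equiv.sumCongr (Equiv.refl _) (pairBlockEquiv n)).trans finSumFinEquiv) := by
  have word : chernSimonsWord (fun x => restrictScalarsEnd C E (l x))
      (fun v => restrictScalarsEnd C E (R v)) n =
        restrictScalarsEnd C E ∘ chernSimonsWord l R n :=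
    funext fun b => (map_chernSimonsWord (restrictScalarsEnd C E) l R n b).symm
  rw [wedge_wpow_eq_antisymmetrize (fun x => restrictScalarsEnd C E (l x)), word,
    ← map_antisymmetrize, ← map_smul, trR_restrictScalarsEnd, LinearMap.map_smul_of_tower,
    map_antisymmetrize]
  rfl

end RestrictScalars

section PairingAdjoint

variable {L C E F : Type*} [CommRing C] [AddCommGroup E] [Module C E] [AddCommGroup F] [Module C F]
  (h : E →ₗ[C] F →ₗ[C] C) [h.IsPerfPair]

/-- The adjoint along a perfect pairing `h` of an endomorphism of the left module, that is, its
transpose transported along the identification of the right module with the dual. -/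
noncomputable def pairingAdjoint : Module.End C E →ₗ[C] Module.End C F :=
  h.flip.toPerfPair.symm.conj.toLinearMap ∘ₗ Module.Dual.transpose

lemma apply_pairingAdjoint (f : Module.End C E) (s : E) (t : F) :
    h s (pairingAdjoint h f t) = h (f s) t := by
  simp [pairingAdjoint, LinearEquiv.conj_apply, Module.Dual.transpose_apply]

lemma eq_pairingAdjoint {f : Module.End C E} {g : F → F} (hfg : ∀ s t, h (f s) t = h s (g t)) :
    g = pairingAdjoint h f :=
  funext fun t => (LinearMap.IsPerfPair.bijective_right h).injective <|
    LinearMap.ext fun s => (hfg s t).symm.trans (apply_pairingAdjoint h f s t).symm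

lemma pairingAdjoint_one : pairingAdjoint h 1 = 1 :=
  DFunLike.coe_injective (eq_pairingAdjoint h (g := id) fun _ _ => rfl).symm

lemma pairingAdjoint_mul (f g : Module.End C E) :
    pairingAdjoint h (f * g) = pairingAdjoint h g * pairingAdjoint h f :=
  DFunLike.coe_injective (eq_pairingAdjoint h (g := pairingAdjoint h g * pairingAdjoint h f)
    fun s t => by simp [apply_pairingAdjoint]).symm

lemma trace_pairingAdjoint [Module.Finite C E] [Module.Free C E] (f : Module.End C E) :
    LinearMap.trace C F (pairingAdjoint h f) = LinearMap.trace C E f := by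
  simp [pairingAdjoint]

lemma blockProd_neg_pairingAdjoint {κ : Type*} (R : (κ → L) → Module.End C E) (n : ℕ)
    (b : Fin n × κ → L) :
    blockProd (fun v => -pairingAdjoint h (R v)) n b =
      (-1 : ℤ) ^ n • pairingAdjoint h (blockProd R n (b ∘ Prod.map Fin.rev id)) := by
  induction n with
  | zero => simp [blockProd, pairingAdjoint_one]
  | succ n ih =>
    rw [blockProd_succ, ih, blockProd_succ_last, pairingAdjoint_mul, pow_succ, mul_smul_comm,
      mul_smul, neg_one_smul, neg_mul]
    simp [Function.comp_def, Prod.map, Fin.rev_castSucc]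

/-- The permutation reversing the order of the `n` blocks of length two and fixing the initial
slot. -/
def blockReversal (n : ℕ) : Equiv.Perm (Fin 1 ⊕ Fin n × Fin 2) :=
  Equiv.sumCongr 1 (Equiv.prodCongrLeft fun _ => Fin.revPerm)

lemma sign_blockReversal (n : ℕ) : Equiv.Perm.sign (blockReversal n) = 1 := by
  simp [blockReversal, Equiv.Perm.sign_prodCongrLeft, Int.units_sq]

lemma trace_chernSimonsWord_neg_pairingAdjoint [Module.Finite C E] [Module.Free C E]
    (l : L → Module.End C E) (R : (Fin 2 → L) → Module.End C E) (n : ℕ)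
    (b : Fin 1 ⊕ Fin n × Fin 2 → L) :
    LinearMap.trace C F (chernSimonsWord (fun x => -pairingAdjoint h (l x))
        (fun v => -pairingAdjoint h (R v)) n b) =
      (-1 : ℤ) ^ (n + 1) •
        LinearMap.trace C E (chernSimonsWord l R n (b ∘ blockReversal n)) := by
  let x := l (b (Sum.inl 0))
  let y := blockProd R n (b ∘ Sum.inr ∘ Prod.map Fin.rev id)
  calc LinearMap.trace C F (chernSimonsWord (fun x => -pairingAdjoint h (l x))
          (fun v => -pairingAdjoint h (R v)) n b)
      = LinearMap.trace C F ((-1 : ℤ) ^ (n + 1) • pairingAdjoint h (y * x)) := by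
        rw [chernSimonsWord, blockProd_neg_pairingAdjoint, pairingAdjoint_mul, mul_smul_comm,
          neg_mul, smul_neg, pow_succ, mul_neg_one, neg_smul]
        rfl
    _ = (-1 : ℤ) ^ (n + 1) • LinearMap.trace C E (x * y) := by
        rw [map_zsmul, trace_pairingAdjoint, LinearMap.trace_mul_comm]

lemma exists_restrictScalarsEnd_eq_of_skew [Algebra ℝ C] [Module ℝ E] [IsScalarTower ℝ C E]
    [Module ℝ F] [IsScalarTower ℝ C F] {A : Module.End ℝ E} {B : Module.End ℝ F}
    (skew : ∀ s t, h (A s) t = -h s (B t)) :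
    ∃ f : Module.End C E, restrictScalarsEnd C E f = A ∧
      restrictScalarsEnd C F (-pairingAdjoint h f) = B := by
  have smul_A (c : C) (s : E) : A (c • s) = c • A s :=
    (LinearMap.IsPerfPair.bijective_left h).injective <| LinearMap.ext fun t => by
      simp [skew]
  let f : Module.End C E := { toFun := A, map_add' := map_add A, map_smul' := smul_A }
  have hf : (fun t => -B t) = pairingAdjoint h f :=
    eq_pairingAdjoint h fun s t => (skew s t).trans (map_neg (h s) (B t)).symm
  refine ⟨f, rfl, LinearMap.ext fun t => ?_⟩
  exact neg_eq_iff_eq_neg.2 (congrFun hf t).symm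

lemma trR_wedge_wpow_of_skew [Module.Finite C E] [Module.Free C E] [Algebra ℝ C] [Module ℝ E]
    [IsScalarTower ℝ C E] [Module ℝ F] [IsScalarTower ℝ C F]
    {l : L → Module.End ℝ E} {l' : L → Module.End ℝ F}
    {R : (Fin 2 → L) → Module.End ℝ E} {R' : (Fin 2 → L) → Module.End ℝ F}
    (skew_l : ∀ x s t, h (l x s) t = -h s (l' x t))
    (skew_R : ∀ v s t, h (R v s) t = -h s (R' v t)) (n : ℕ) (a : Fin (1 + 2 * n) → L) :
    trR C (wedge (fun v : Fin 1 → L => l' (v 0)) (wpow R' n) a) =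
      (-1 : ℤ) ^ (n + 1) • trR C (wedge (fun v : Fin 1 → L => l (v 0)) (wpow R n) a) := by
  choose lC hl hl' using fun x => exists_restrictScalarsEnd_eq_of_skew h (skew_l x)
  choose RC hR hR' using fun v => exists_restrictScalarsEnd_eq_of_skew h (skew_R v)
  obtain rfl := funext hl
  obtain rfl := funext hl'
  obtain rfl := funext hR
  obtain rfl := funext hR'
  let G (b : Fin 1 ⊕ Fin n × Fin 2 → L) : C := LinearMap.trace C E (chernSimonsWord lC RC n b)
  have G_even (b : Fin 1 ⊕ Fin n × Fin 2 → L) :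
      antisymmetrize (fun b => G (b ∘ blockReversal n)) b = antisymmetrize G b := by
    rw [antisymmetrize_comp_perm, sign_blockReversal, Units.val_one, one_smul]
  rw [trR_wedge_wpow lC RC, trR_wedge_wpow (fun x => -pairingAdjoint h (lC x))
    (fun v => -pairingAdjoint h (RC v))]
  simp only [trace_chernSimonsWord_neg_pairingAdjoint]
  rw [antisymmetrize_smul, G_even, smul_comm]

end PairingAdjoint

section Integral

lemma polynomial_eq_of_forall_eval_algebraMap_eq {K C : Type*} [Field K] [Infinite K] [CommRing C]
    [Algebra K C] {P Q : Polynomial C}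
    (hPQ : ∀ t : K, P.eval (algebraMap K C t) = Q.eval (algebraMap K C t)) : P = Q := by
  suffices vanish : ∀ S : Polynomial C, (∀ t : K, S.eval (algebraMap K C t) = 0) → S = 0 from
    sub_eq_zero.1 <| vanish (P - Q) fun t => by rw [Polynomial.eval_sub, hPQ, sub_self]
  intro S hS
  ext k
  rw [Polynomial.coeff_zero, ← Module.forall_dual_apply_eq_zero_iff K]
  intro φ
  let T : Polynomial K := ∑ i ∈ S.support, Polynomial.monomial i (φ (S.coeff i))
  have eval_T (t : K) : T.eval t = φ (S.eval (algebraMap K C t)) := by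
    rw [Polynomial.eval_finsetSum, Polynomial.eval_eq_sum, Polynomial.sum_def, map_sum]
    refine Finset.sum_congr rfl fun i _ => ?_
    rw [Polynomial.eval_monomial, ← map_pow, mul_comm (S.coeff i), ← Algebra.smul_def, map_smul,
      smul_eq_mul, mul_comm]
  have hT : T = 0 := Polynomial.funext fun t => by rw [eval_T, hS, map_zero, Polynomial.eval_zero]
  have coeff_T : T.coeff k = φ (S.coeff k) := by
    simp +contextual [T, Polynomial.finsetSum_coeff, Polynomial.coeff_monomial]
  rw [← coeff_T, hT, Polynomial.coeff_zero]

variable {C : Type*} [CommRing C] [Algebra ℝ C]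

lemma intPolyTo_eq (s : ℝ) {f : ℝ → C} {P : Polynomial C}
    (hP : ∀ t : ℝ, f t = P.eval (algebraMap ℝ C t)) :
    intPolyTo s f =
      ∑ k ∈ Finset.range (P.natDegree + 1), (s ^ (k + 1) / ((k : ℝ) + 1)) • P.coeff k := by
  have poly : ∃ P : Polynomial C, ∀ t : ℝ, f t = P.eval (algebraMap ℝ C t) := ⟨P, hP⟩
  have choose_eq : poly.choose = P := polynomial_eq_of_forall_eval_algebraMap_eq fun t : ℝ =>
    (poly.choose_spec t).symm.trans (hP t)
  rw [intPolyTo, dif_pos poly, choose_eq]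

lemma intPolyTo_neg (s : ℝ) (f : ℝ → C) : intPolyTo s (-f) = -intPolyTo s f := by
  by_cases poly : ∃ P : Polynomial C, ∀ t : ℝ, f t = P.eval (algebraMap ℝ C t)
  · obtain ⟨P, hP⟩ := poly
    have hP_neg (t : ℝ) : (-f) t = (-P).eval (algebraMap ℝ C t) := by simp [hP]
    rw [intPolyTo_eq s hP, intPolyTo_eq s hP_neg]
    simp
  · have not_poly_neg : ¬∃ P : Polynomial C, ∀ t : ℝ, (-f) t = P.eval (algebraMap ℝ C t) :=
      fun ⟨P, hP⟩ => poly ⟨-P, fun t => by rw [Polynomial.eval_neg, ← hP, Pi.neg_apply, neg_neg]⟩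
    rw [intPolyTo, intPolyTo, dif_neg poly, dif_neg not_poly_neg, neg_zero]

lemma intPolyTo_neg_one_pow_smul (s : ℝ) (f : ℝ → C) (n : ℕ) :
    intPolyTo s ((-1 : ℤ) ^ n • f) = (-1 : ℤ) ^ n • intPolyTo s f := by
  rcases n.even_or_odd with hn | hn
  · rw [hn.neg_one_pow, one_smul, one_smul]
  · rw [hn.neg_one_pow, neg_one_smul, neg_one_smul, intPolyTo_neg]

end Integral

section DualConnections

variable {L C E F : Type*} [LieRing L] [LieAlgebra ℝ L] [CommRing C]
  [LieRingModule L C] [AddCommGroup E] [Module ℝ E] [Module C E]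
  [AddCommGroup F] [Module ℝ F] [Module C F]

/-- `D'` is dual to `D` along the pairing `h`: `ρ(a)(h(s, t)) = h(D_a s, t) + h(s, D'_a t)`, where
`ρ(a)(f)` is written `⁅a, f⁆`. For `E = F` this says that `D'` is the `h`-adjoint of `D`; if
`F = Hom_C(E, C)` with the evaluation pairing, `D'` is the dual connection. -/
def IsDualConn (h : E →ₗ[C] F →ₗ[C] C) (D : L →ₗ[ℝ] Module.End ℝ E)
    (D' : L →ₗ[ℝ] Module.End ℝ F) : Prop :=
  ∀ (a : L) (s : E) (t : F), ⁅a, h s t⁆ = h (D a s) t + h s (D' a t)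

namespace IsDualConn

variable {h : E →ₗ[C] F →ₗ[C] C} {D D0 D1 : L →ₗ[ℝ] Module.End ℝ E}
  {D' D0' D1' : L →ₗ[ℝ] Module.End ℝ F}

lemma sub_skew (h0 : IsDualConn h D0 D0') (h1 : IsDualConn h D1 D1') (a : L) (s : E) (t : F) :
    h ((D1 - D0) a s) t = -h s ((D1' - D0') a t) := by
  simp only [LinearMap.sub_apply, map_sub]
  linear_combination h0 a s t - h1 a s t

lemma add_smul_sub [Algebra ℝ C] [IsScalarTower ℝ C E] [IsScalarTower ℝ C F]
    (h0 : IsDualConn h D0 D0') (h1 : IsDualConn h D1 D1') (r : ℝ) :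
    IsDualConn h (D0 + r • (D1 - D0)) (D0' + r • (D1' - D0')) := by
  intro a s t
  simp only [LinearMap.add_apply, LinearMap.smul_apply, map_add, LinearMap.map_smul_of_tower,
    sub_skew h0 h1]
  rw [h0 a s t, smul_neg]
  ring

lemma curv_skew (hD : IsDualConn h D D') (a b : L) (s : E) (t : F) :
    h (curv D a b s) t = -h s (curv D' a b t) := by
  have second_derivative (a b : L) :
      h (D a (D b s)) t = ⁅a, ⁅b, h s t⁆⁆ - ⁅a, h s (D' b t)⁆ - ⁅b, h s (D' a t)⁆
        + h s (D' b (D' a t)) := by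
    rw [hD b s t, lie_add, hD a (D b s) t, hD b s (D' a t)]
    ring
  have bracket : h (D ⁅a, b⁆ s) t + h s (D' ⁅a, b⁆ t) = ⁅a, ⁅b, h s t⁆⁆ - ⁅b, ⁅a, h s t⁆⁆ := by
    rw [← hD, lie_lie]
  simp only [curv, LinearMap.sub_apply, Module.End.mul_apply, map_sub]
  rw [second_derivative a b, second_derivative b a]
  linear_combination -bracket

end IsDualConn

end DualConnections

theorem stmt13_general {L C E F : Type*} [LieRing L] [LieAlgebra ℝ L] [CommRing C] [Algebra ℝ C]
    [LieRingModule L C] [AddCommGroup E] [Module ℝ E] [Module C E] [IsScalarTower ℝ C E]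
    [AddCommGroup F] [Module ℝ F] [Module C F] [IsScalarTower ℝ C F]
    [Module.Finite C E] [Module.Free C E] (h : E →ₗ[C] F →ₗ[C] C) [h.IsPerfPair]
    {D0 D1 : L →ₗ[ℝ] Module.End ℝ E} {D0' D1' : L →ₗ[ℝ] Module.End ℝ F}
    (h0 : IsDualConn h D0 D0') (h1 : IsDualConn h D1 D1') {p : ℕ} (hp : 1 ≤ p)
    (v : Fin (2 * (p - 1) + 1) → L) :
    csPair C D0' D1' p v = (-1 : ℤ) ^ p • csPair C D0 D1 p v := by
  obtain ⟨n, rfl⟩ := Nat.exists_eq_add_of_le' hp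
  rw [csPair, csPair, smul_comm, ← intPolyTo_neg_one_pow_smul]
  congr 2
  funext r
  exact trR_wedge_wpow_of_skew h (h0.sub_skew h1)
    (fun v => (h0.add_smul_sub h1 r).curv_skew (v 0) (v 1)) n _

/-- `cs_p(∇⁰ʰ, ∇¹ʰ) = (−1)^p · cs_p(∇⁰, ∇¹)`. -/
theorem stmt13 {L : Type*} {C : Type*} {E : Type*}
    [LieRing L] [LieAlgebra ℝ L] [CommRing C] [Algebra ℝ C] [Module C L]
    [AddCommGroup E] [Module ℝ E] [Module C E] [IsScalarTower ℝ C E]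
    [Module.Finite C E] [Module.Free C E]
    (ρ : L →ₗ[ℝ] Derivation ℝ C C)
    (hρ : ∀ (a b : L) (f : C), ρ ⁅a, b⁆ f = ρ a (ρ b f) - ρ b (ρ a f))
    (hLeib : ∀ (a b : L) (f : C), ⁅a, f • b⁆ = f • ⁅a, b⁆ + ρ a f • b)
    (h : E →ₗ[C] E →ₗ[C] C) (hsymm : ∀ s t : E, h s t = h t s)
    (hnd : Function.Bijective (⇑h))
    (D0 D1 D0h D1h : L →ₗ[ℝ] Module.End ℝ E)
    (h0 : IsConn ρ D0) (h1 : IsConn ρ D1) (h0h : IsConn ρ D0h) (h1h : IsConn ρ D1h)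
    (hadj0 : ∀ (a : L) (s t : E), ρ a (h s t) = h (D0 a s) t + h s (D0h a t))
    (hadj1 : ∀ (a : L) (s t : E), ρ a (h s t) = h (D1 a s) t + h s (D1h a t))
    (p : ℕ) (hp : 1 ≤ p) :
    ∀ v : Fin (2 * (p - 1) + 1) → L,
      csPair C D0h D1h p v = (-1 : ℤ) ^ p • csPair C D0 D1 p v := by
  let : LieRingModule L C :=
    { bracket := fun a f => ρ a f
      add_lie := fun a b f => by simp
      lie_add := fun a => map_add (ρ a)
      leibniz_lie := fun a b f => by simp [hρ] }
  have : h.IsPerfPair := .of_bijective h hnd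
  exact stmt13_general h hadj0 hadj1 hp
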